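/- arXiv:1506.08484 — 2 statements merged into one kernel-verified Lean document; each statement's English description precedes it below -/
import Mathlib

section
/- Let k ∈ {0,1}. Suppose m₀ is the unique maximizer of 𝑝̃ on [0,1], that L₁^{(ℓ)}(m₀) = 0 for all 0 ≤ ℓ ≤ 2k, and that L₁^{(2k+1)}(m₀) > 0. Set W = (M − N·m₀)/N^{(2k+1)/(2k+2)}, where M = ∑σ_i and σ is drawn from the weighted Curie–Weiss Gibbs measure. Then there exists a constant K such that E[W^{2k+2}] ≤ K for all N ≥ 1. -/
open Real Finset MeasureTheory

noncomputable section

/-- Dimer configurations (matchings of the complete graph on `Fin N`), encoded as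
involutions of `Fin N`: fixed points are monomers, 2-cycles are dimers. -/
abbrev Dimer (N : ℕ) := {f : Fin N → Fin N // ∀ i, f (f i) = i}

/-- The set of monomers (dimer-free vertices) of a dimer configuration. -/
def monomers {N : ℕ} (D : Dimer N) : Finset (Fin N) :=
  Finset.univ.filter fun i => D.1 i = i

/-- Monomer density `m(D) = |𝓜(D)|/N`. -/
def mDim {N : ℕ} (D : Dimer N) : ℝ := ((monomers D).card : ℝ) / N

/-- The parameter `b = (log N)/2 + h - J`. -/
def bIMD (N : ℕ) (J h : ℝ) : ℝ := Real.log N / 2 + h - J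

/-- The Gibbs weight `exp(-H(D)) = exp(N (a m(D)^2 + b m(D)))` with `a = J`. -/
def wDim (N : ℕ) (J h : ℝ) (D : Dimer N) : ℝ :=
  Real.exp (N * (J * mDim D ^ 2 + bIMD N J h * mDim D))

/-- The probability of an event `A` under the IMD Gibbs measure. -/
def probDim (N : ℕ) (J h : ℝ) (A : Dimer N → Prop) : ℝ :=
  (∑ D : Dimer N, Set.indicator {D | A D} (wDim N J h) D) / ∑ D : Dimer N, wDim N J h D

/-- The conditional probability `ℙ(A | B)` under the IMD Gibbs measure. -/
def condProbDim (N : ℕ) (J h : ℝ) (A B : Dimer N → Prop) : ℝ :=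
  (∑ D : Dimer N, Set.indicator {D | A D ∧ B D} (wDim N J h) D) /
    ∑ D : Dimer N, Set.indicator {D | B D} (wDim N J h) D

/-- `g(x) = (√(e^{4x} + 4 e^{2x}) - e^{2x})/2`. -/
def gFun (x : ℝ) : ℝ := (Real.sqrt (Real.exp (4*x) + 4 * Real.exp (2*x)) - Real.exp (2*x)) / 2

/-- `τ(x) = (2x-1)J + h`. -/
def tauFun (J h x : ℝ) : ℝ := (2*x - 1) * J + h

/-- `𝑝̃(m) = -J m² - (1 - g(τ(m)) + log(1 - g(τ(m))))/2`. -/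
def ptilde (J h m : ℝ) : ℝ :=
  -J * m^2 - (1 - gFun (tauFun J h m) + Real.log (1 - gFun (tauFun J h m))) / 2

/-- The CDF of a centered Gaussian with variance `v`, evaluated at `z`. -/
def gaussCDF (v : ℝ) (z : ℝ) : ℝ :=
  (ProbabilityTheory.gaussianReal 0 (Real.toNNReal v) (Set.Iic z)).toReal

/-- Spin configurations `Σ = {0,1}^N`. -/
abbrev Config (N : ℕ) := Fin N → Bool

/-- `𝓐(σ) = {i : σ_i = 1}`. -/
def ASet {N : ℕ} (σ : Config N) : Finset (Fin N) := Finset.univ.filter fun i => σ i = true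

/-- `M(σ) = ∑ σ_i`. -/
def Msum {N : ℕ} (σ : Config N) : ℕ := (ASet σ).card

/-- Magnetization `m(σ) = M(σ)/N`. -/
def mConf {N : ℕ} (σ : Config N) : ℝ := (Msum σ : ℝ) / N

/-- `D(σ)`: the number of dimer configurations `D` with `𝓜(D) = 𝓐(σ)`. -/
def Dcount (N : ℕ) (σ : Config N) : ℕ :=
  (Finset.univ.filter fun D : Dimer N => monomers D = ASet σ).card

/-- The weight `D(σ) exp(-H(σ))` of the weighted Curie–Weiss model. -/
def wConf (N : ℕ) (J h : ℝ) (σ : Config N) : ℝ :=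
  (Dcount N σ : ℝ) * Real.exp (N * (J * mConf σ ^ 2 + bIMD N J h * mConf σ))

/-- The probability of an event `A` under the weighted Curie–Weiss Gibbs measure. -/
def probConf (N : ℕ) (J h : ℝ) (A : Config N → Prop) : ℝ :=
  (∑ σ : Config N, Set.indicator {σ | A σ} (wConf N J h) σ) / ∑ σ : Config N, wConf N J h σ

/-- Expectation under the weighted Curie–Weiss Gibbs measure. -/
def EConf (N : ℕ) (J h : ℝ) (f : Config N → ℝ) : ℝ :=
  (∑ σ : Config N, wConf N J h σ * f σ) / ∑ σ : Config N, wConf N J h σ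

/-- `L₁(m) = 2(1-m)(m² - (1-m)e^{2τ(m)})/((1-m) + e^{2τ(m)})`. -/
def Lone (J h m : ℝ) : ℝ :=
  2*(1-m)*(m^2 - (1-m)*Real.exp (2 * tauFun J h m)) / ((1-m) + Real.exp (2 * tauFun J h m))

/-- `L₂(m) = 4(1-m)(m² + (1-m)e^{2τ(m)})/((1-m) + e^{2τ(m)})`. -/
def Ltwo (J h m : ℝ) : ℝ :=
  4*(1-m)*(m^2 + (1-m)*Real.exp (2 * tauFun J h m)) / ((1-m) + Real.exp (2 * tauFun J h m))

/-- The configuration obtained from `σ` by setting the spins at `u, v` to `s, t`. -/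
def upd {N : ℕ} (σ : Config N) (u v : Fin N) (s t : Bool) : Config N :=
  fun i => if i = u then s else if i = v then t else σ i

/-- The edges of the complete graph, enumerated as ordered pairs `u < v`. -/
def cEdges (N : ℕ) : Finset (Fin N × Fin N) := Finset.univ.filter fun p => p.1 < p.2

/-- The probability of resampling the pair of spins at `(u,v)` to `(s,t)`:
the conditional distribution of `(σ_u, σ_v)` given `(σ_i)_{i ≠ u,v}`. -/
def qCond (N : ℕ) (J h : ℝ) (σ : Config N) (u v : Fin N) (s t : Bool) : ℝ :=
  wConf N J h (upd σ u v s t) / ∑ st : Bool × Bool, wConf N J h (upd σ u v st.1 st.2)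

/-- `E[F(σ, σ') | σ]` for the exchangeable pair `(σ, σ')` obtained by resampling the
spins at a uniformly chosen edge. -/
def condE2 (N : ℕ) (J h : ℝ) (F : Config N → Config N → ℝ) (σ : Config N) : ℝ :=
  ((cEdges N).card : ℝ)⁻¹ * ∑ p ∈ cEdges N, ∑ st : Bool × Bool,
    qCond N J h σ p.1 p.2 st.1 st.2 * F σ (upd σ p.1 p.2 st.1 st.2)

/-- The weight of the Gibbs measure conditioned on the event `S`. -/
def wCond (N : ℕ) (J h : ℝ) (S : Config N → Prop) (σ : Config N) : ℝ :=
  Set.indicator {σ | S σ} (wConf N J h) σ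

/-- `ℙ_ℓ(A) = ℙ(A | S)`, probability under the conditioned Gibbs measure. -/
def probL (N : ℕ) (J h : ℝ) (S A : Config N → Prop) : ℝ :=
  (∑ σ : Config N, Set.indicator {σ | A σ} (wCond N J h S) σ) / ∑ σ : Config N, wCond N J h S σ

/-- Expectation under the conditioned Gibbs measure `ℙ(·|S)`. -/
def EL (N : ℕ) (J h : ℝ) (S : Config N → Prop) (f : Config N → ℝ) : ℝ :=
  (∑ σ : Config N, wCond N J h S σ * f σ) / ∑ σ : Config N, wCond N J h S σ

/-- Resampling probability for the conditioned measure `ℙ(·|S)`. -/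
def qCondL (N : ℕ) (J h : ℝ) (S : Config N → Prop) (σ : Config N) (u v : Fin N)
    (s t : Bool) : ℝ :=
  wCond N J h S (upd σ u v s t) / ∑ st : Bool × Bool, wCond N J h S (upd σ u v st.1 st.2)

/-- `E_ℓ[F(σ, σ') | σ]` for the exchangeable pair under the conditioned measure. -/
def condE2L (N : ℕ) (J h : ℝ) (S : Config N → Prop) (F : Config N → Config N → ℝ)
    (σ : Config N) : ℝ :=
  ((cEdges N).card : ℝ)⁻¹ * ∑ p ∈ cEdges N, ∑ st : Bool × Bool,
    qCondL N J h S σ p.1 p.2 st.1 st.2 * F σ (upd σ p.1 p.2 st.1 st.2)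

/-- The maximizer set `O` of `𝑝̃` on `[0,1]`. -/
def maxSet (J h : ℝ) : Set ℝ :=
  {x | x ∈ Set.Icc (0:ℝ) 1 ∧ ∀ y ∈ Set.Icc (0:ℝ) 1, ptilde J h y ≤ ptilde J h x}

end

/-! The Gibbs weight of each monomer density `m` is explicit, and the ratio of consecutive weights
gives a detailed-balance identity. Letting the step `1 / N` in it tend to `0` shows that
`E[Q(m) φ(m)] = O(1 / N)` for smooth `φ`, where `Q(m) = m² - (1 - m) e^{2τ(m)}`. Take
`φ(m) = m - m₀`. Near `m₀` the Taylor expansion of `L₁`, a positive multiple of `Q` on `[0, 1)`,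
bounds `Q(m) (m - m₀)` below by a multiple of `(m - m₀)^{2k+2}`. Away from `m₀` the mass is
exponentially small: `𝑝̃` exceeds the free energy by a relative entropy that vanishes at the
critical points, so `m₀` also is the unique maximizer of the free energy. Hence
`E[(m - m₀)^{2k+2}] = O(1 / N)`, which is the claim before rescaling. -/

/-! ### Real analysis -/

theorem mul_klFun_div {g : ℝ} (hg : g ≠ 0) (m : ℝ) :
    g * InformationTheory.klFun (m / g) = g - m - m * log g - negMulLog m := by
  rcases eq_or_ne m 0 with rfl | hm
  · simp [InformationTheory.klFun_zero]
  · rw [InformationTheory.klFun, log_div hm hg, negMulLog]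
    field_simp
    ring

theorem mul_div_rpow_pow_succ {x : ℝ} (hx : 0 < x) (y : ℝ) (n : ℕ) :
    (x * y / x ^ ((n : ℝ) / (n + 1))) ^ (n + 1) = x * y ^ (n + 1) := by
  have hrpow : (x ^ ((n : ℝ) / (n + 1))) ^ (n + 1) = x ^ n := by
    rw [← rpow_natCast, ← rpow_mul hx.le, ← rpow_natCast]
    congr 1
    push_cast
    field_simp
  rw [div_pow, hrpow, mul_pow, pow_succ x]
  field_simp

/-- The remainder in the leading-order Stirling approximation of `log n!`. -/
noncomputable def stirlingRemainder (n : ℕ) : ℝ := log n.factorial - (n * log n - n)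

theorem stirlingRemainder_nonneg (n : ℕ) : 0 ≤ stirlingRemainder n := by
  have hpow : (0 : ℝ) < n ^ n := by exact_mod_cast Nat.pow_self_pos
  have hlog := log_le_log (by positivity) (pow_div_factorial_le_exp (n : ℝ) n.cast_nonneg n)
  rw [log_exp, log_div hpow.ne' (by positivity), log_pow] at hlog
  unfold stirlingRemainder
  linarith

theorem stirlingRemainder_le {n N : ℕ} (hn : n ≤ N) :
    stirlingRemainder n ≤ 1 + log N / 2 := by
  rcases n with _ | n
  · calc stirlingRemainder 0 = 0 := by simp [stirlingRemainder]
      _ ≤ 1 + log N / 2 := by positivity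
  have hanti : log (Stirling.stirlingSeq (n + 1)) ≤ log (Stirling.stirlingSeq 1) :=
    Stirling.log_stirlingSeq'_antitone n.zero_le
  rw [Stirling.log_stirlingSeq_formula, Stirling.stirlingSeq_one,
    log_div (exp_pos 1).ne' (by positivity), log_div (by positivity) (exp_pos 1).ne',
    log_mul two_ne_zero (by positivity), log_sqrt zero_le_two, log_exp] at hanti
  have hlog : log (n + 1 : ℕ) ≤ log N := log_le_log (by positivity) (by exact_mod_cast hn)
  unfold stirlingRemainder
  linarith

section Asymptotics

open Filter Topology Asymptotics

theorem tendsto_natCast_pow_mul_exp_neg_mul {η : ℝ} (hη : 0 < η) (d : ℕ) :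
    Tendsto (fun N : ℕ => (N : ℝ) ^ d * exp (-(N * η))) atTop (𝓝 0) := by
  have hlim := ((tendsto_pow_mul_exp_neg_atTop_nhds_zero d).comp
    (tendsto_natCast_atTop_atTop.atTop_mul_const hη)).const_mul (η ^ d)⁻¹
  rw [mul_zero] at hlim
  refine hlim.congr fun N => ?_
  simp only [Function.comp_apply, mul_pow]
  field_simp

theorem isLittleO_sub_pow_smul_iteratedDeriv {E : Type*} [NormedAddCommGroup E] [NormedSpace ℝ E]
    {f : ℝ → E} {x₀ : ℝ} {n : ℕ} (hf : ContDiffAt ℝ n f x₀)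
    (hzero : ∀ l < n, iteratedDeriv l f x₀ = 0) :
    (fun x => f x - ((n.factorial : ℝ)⁻¹ * (x - x₀) ^ n) • iteratedDeriv n f x₀)
      =o[𝓝 x₀] fun x => (x - x₀) ^ n := by
  obtain ⟨u, hu, hfu⟩ := hf.contDiffOn le_rfl (by simp)
  obtain ⟨r, hr, hball⟩ := Metric.mem_nhds_iff.1 hu
  have htaylor := taylor_isLittleO (convex_ball x₀ r) (Metric.mem_ball_self hr) (hfu.mono hball)
  rw [Metric.isOpen_ball.nhdsWithin_eq (Metric.mem_ball_self hr)] at htaylor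
  refine htaylor.congr_left fun x => ?_
  have hderiv : ∀ l, iteratedDerivWithin l f (Metric.ball x₀ r) x₀ = iteratedDeriv l f x₀ :=
    fun l => iteratedDerivWithin_of_isOpen Metric.isOpen_ball (Metric.mem_ball_self hr)
  simp only [taylor_within_apply, hderiv]
  rw [sum_range_succ, sum_eq_zero, zero_add]
  intro l hl
  rw [hzero l (mem_range.1 hl), smul_zero]

theorem exists_eventually_pow_succ_le_mul_sub {f : ℝ → ℝ} {x₀ : ℝ} {n : ℕ} (hn : Odd n)
    (hf : ContDiffAt ℝ n f x₀) (hzero : ∀ l < n, iteratedDeriv l f x₀ = 0)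
    (hpos : 0 < iteratedDeriv n f x₀) :
    ∃ c > 0, ∀ᶠ x in 𝓝 x₀, c * (x - x₀) ^ (n + 1) ≤ f x * (x - x₀) := by
  set a := (n.factorial : ℝ)⁻¹ * iteratedDeriv n f x₀ with ha
  have ha0 : 0 < a := by positivity
  refine ⟨a / 2, half_pos ha0, ?_⟩
  filter_upwards [(isLittleO_sub_pow_smul_iteratedDeriv hf hzero).bound (half_pos ha0)] with x hx
  have hremainder : |f x * (x - x₀) - a * (x - x₀) ^ (n + 1)| ≤ a / 2 * (x - x₀) ^ (n + 1) :=
    calc |f x * (x - x₀) - a * (x - x₀) ^ (n + 1)|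
        = ‖f x - ((n.factorial : ℝ)⁻¹ * (x - x₀) ^ n) • iteratedDeriv n f x₀‖ * |x - x₀| := by
          rw [norm_eq_abs, ← abs_mul, smul_eq_mul, ha]
          ring_nf
      _ ≤ a / 2 * ‖(x - x₀) ^ n‖ * |x - x₀| := by gcongr
      _ = a / 2 * (x - x₀) ^ (n + 1) := by
          rw [norm_eq_abs, abs_pow, mul_assoc, ← pow_succ, hn.add_one.pow_abs]
  linarith [(abs_le.1 hremainder).1]

theorem exists_le_add_indicator_of_eventually_le {X : Type*} [PseudoMetricSpace X] {K : Set X}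
    (hK : IsCompact K) {f g : X → ℝ} (hf : ContinuousOn f K) (hg : ContinuousOn g K) {x₀ : X}
    (hfg : ∀ᶠ x in 𝓝 x₀, f x ≤ g x) :
    ∃ δ > 0, ∃ b ≥ 0, ∀ x ∈ K, f x ≤ g x + b * {x | δ ≤ dist x x₀}.indicator 1 x := by
  obtain ⟨δ, hδ, hnear⟩ := Metric.eventually_nhds_iff.1 hfg
  obtain ⟨b, hb⟩ := hK.bddAbove_image (hf.sub hg)
  refine ⟨δ, hδ, max b 0, le_max_right _ _, fun x hx => ?_⟩
  by_cases hfar : δ ≤ dist x x₀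
  · have hdiff : f x - g x ≤ b := hb ⟨x, hx, rfl⟩
    rw [Set.indicator_of_mem (show x ∈ {x | δ ≤ dist x x₀} from hfar), Pi.one_apply, mul_one]
    linarith [le_max_left b 0]
  · rw [Set.indicator_of_notMem (show x ∉ {x | δ ≤ dist x x₀} from hfar), mul_zero, add_zero]
    exact hnear (not_le.1 hfar)

end Asymptotics

/-! ### Gibbs averages -/

theorem wConf_nonneg (N : ℕ) (J h : ℝ) (σ : Config N) : 0 ≤ wConf N J h σ := by
  unfold wConf
  positivity

theorem mConf_mem_Icc {N : ℕ} (σ : Config N) : mConf σ ∈ Set.Icc (0 : ℝ) 1 := by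
  refine ⟨by unfold mConf; positivity, div_le_one_of_le₀ ?_ N.cast_nonneg⟩
  exact_mod_cast (card_le_univ (ASet σ)).trans_eq (Fintype.card_fin N)

section EConf

variable {N : ℕ} {J h : ℝ}

theorem EConf_add (f g : Config N → ℝ) :
    EConf N J h (fun σ => f σ + g σ) = EConf N J h f + EConf N J h g := by
  simp only [EConf, mul_add, sum_add_distrib, add_div]

theorem EConf_sub (f g : Config N → ℝ) :
    EConf N J h (fun σ => f σ - g σ) = EConf N J h f - EConf N J h g := by
  simp only [EConf, mul_sub, sum_sub_distrib, sub_div]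

theorem EConf_const_mul (c : ℝ) (f : Config N → ℝ) :
    EConf N J h (fun σ => c * f σ) = c * EConf N J h f := by
  simp only [EConf, mul_left_comm _ c, ← mul_sum, mul_div_assoc]

theorem EConf_mono {f g : Config N → ℝ} (hfg : ∀ σ, f σ ≤ g σ) :
    EConf N J h f ≤ EConf N J h g :=
  div_le_div_of_nonneg_right
    (sum_le_sum fun σ _ => mul_le_mul_of_nonneg_left (hfg σ) (wConf_nonneg N J h σ))
    (sum_nonneg fun σ _ => wConf_nonneg N J h σ)

theorem EConf_le_of_forall_le {f : Config N → ℝ} {c : ℝ} (hc : 0 ≤ c) (hf : ∀ σ, f σ ≤ c) :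
    EConf N J h f ≤ c :=
  calc EConf N J h f ≤ EConf N J h fun _ => c := EConf_mono hf
    _ = c * ((∑ σ, wConf N J h σ) / ∑ σ, wConf N J h σ) := by
      rw [EConf, ← sum_mul, mul_div_right_comm, mul_comm]
    _ ≤ c := mul_le_of_le_one_right hc (div_self_le_one _)

theorem EConf_indicator_comp_mConf (A : Set ℝ) :
    EConf N J h (fun σ => A.indicator 1 (mConf σ)) = probConf N J h fun σ => mConf σ ∈ A := by
  unfold EConf probConf
  congr 1
  refine sum_congr rfl fun σ _ => ?_
  by_cases hσ : mConf σ ∈ A <;> simp [hσ]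

end EConf

/-! ### Counting dimer configurations -/

/-- A dimer configuration as a permutation, which transposes the endpoints of each dimer; this
gives access to the count of permutations of a given cycle type. -/
def dimerPerm {N : ℕ} (D : Dimer N) : Equiv.Perm (Fin N) :=
  Function.Involutive.toPerm D.1 D.2

theorem dimerPerm_apply {N : ℕ} (D : Dimer N) (i : Fin N) : dimerPerm D i = D.1 i := rfl

theorem dimerPerm_sq {N : ℕ} (D : Dimer N) : dimerPerm D ^ 2 = 1 :=
  Equiv.ext fun i => by simpa [sq, dimerPerm_apply] using D.2 i

/-- The number of dimers of a configuration. -/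
def dimerCard {N : ℕ} (D : Dimer N) : ℕ := (dimerPerm D).cycleType.card

theorem cycleType_dimerPerm {N : ℕ} (D : Dimer N) :
    (dimerPerm D).cycleType = Multiset.replicate (dimerCard D) 2 :=
  Equiv.Perm.cycleType_of_pow_prime_eq_one (dimerPerm_sq D)

theorem card_monomers_add_two_mul_dimerCard {N : ℕ} (D : Dimer N) :
    (monomers D).card + 2 * dimerCard D = N := by
  have hsupport : monomers D = (dimerPerm D).supportᶜ := by
    ext i
    simp [monomers, dimerPerm_apply]
  have hcard : (dimerPerm D).support.card = 2 * dimerCard D := by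
    rw [← Equiv.Perm.sum_cycleType, cycleType_dimerPerm, Multiset.sum_replicate, smul_eq_mul,
      mul_comm]
  rw [hsupport, ← hcard, card_compl_add_card, Fintype.card_fin]

theorem card_filter_dimerCard_eq (N n : ℕ) :
    (univ.filter fun D : Dimer N => dimerCard D = n).card =
      (univ.filter fun g : Equiv.Perm (Fin N) =>
        g.cycleType = Multiset.replicate n 2).card := by
  refine card_bij (fun D _ => dimerPerm D) (fun D hD => ?_) (fun D _ D' _ hDD' => ?_)
    (fun g hg => ?_)
  · simpa [cycleType_dimerPerm] using congrArg (Multiset.replicate · 2) (mem_filter.1 hD).2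
  · exact Subtype.ext (congrArg DFunLike.coe hDD')
  · have hg := (mem_filter.1 hg).2
    have hsq : g ^ 2 = 1 := by
      rw [Equiv.Perm.pow_prime_eq_one_iff, hg]
      exact fun c hc => Multiset.eq_of_mem_replicate hc
    let D : Dimer N := ⟨g, fun i => by simpa [sq] using congrArg (· i) hsq⟩
    have hD : dimerPerm D = g := Equiv.ext fun _ => rfl
    exact ⟨D, mem_filter.2 ⟨mem_univ _, by rw [dimerCard, hD, hg, Multiset.card_replicate]⟩, hD⟩

/-- The number of matchings of the complete graph on `N` vertices with `n ≤ N / 2` edges. -/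
noncomputable def matchingCount (N n : ℕ) : ℝ :=
  N.factorial / ((N - 2 * n).factorial * 2 ^ n * n.factorial)

theorem matchingCount_pos (N n : ℕ) : 0 < matchingCount N n := by
  unfold matchingCount
  positivity

theorem card_filter_dimerCard {N n : ℕ} (hn : 2 * n ≤ N) :
    ((univ.filter fun D : Dimer N => dimerCard D = n).card : ℝ) = matchingCount N n := by
  have hcount := Equiv.Perm.card_of_cycleType_mul_eq (Fin N) (Multiset.replicate n 2)
  have hprod : ∏ k ∈ (Multiset.replicate n 2).toFinset,
      ((Multiset.replicate n 2).count k).factorial = n.factorial := by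
    rcases eq_or_ne n 0 with rfl | hn0
    · simp
    · simp [Multiset.toFinset_replicate, hn0]
  rw [hprod, if_pos ⟨by simpa [mul_comm] using hn,
    fun a ha => (Multiset.eq_of_mem_replicate ha).ge⟩] at hcount
  simp only [Fintype.card_fin, Multiset.sum_replicate, Multiset.prod_replicate, smul_eq_mul,
    mul_comm n 2] at hcount
  rw [matchingCount, eq_div_iff (by positivity), card_filter_dimerCard_eq]
  exact_mod_cast hcount

theorem matchingCount_succ {N n : ℕ} (hn : 2 * (n + 1) ≤ N) :
    matchingCount N (n + 1) * (2 * (n + 1)) =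
      matchingCount N n * ((N - 2 * n) * (N - 2 * n - 1)) := by
  obtain ⟨i, rfl⟩ := Nat.exists_eq_add_of_le hn
  have hsub : 2 * (n + 1) + i - 2 * (n + 1) = i := by omega
  have hsub' : 2 * (n + 1) + i - 2 * n = i + 2 := by omega
  unfold matchingCount
  rw [hsub, hsub', Nat.factorial_succ (i + 1), Nat.factorial_succ i, Nat.factorial_succ n]
  push_cast
  field_simp
  ring

/-! ### The law of the monomer density -/

/-- The spin configuration that marks the monomers of a dimer configuration; under this map the
monomer-dimer measure pushes forward to the weighted Curie–Weiss measure. -/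
def monomerConfig {N : ℕ} (D : Dimer N) : Config N := fun i => decide (D.1 i = i)

theorem ASet_monomerConfig {N : ℕ} (D : Dimer N) : ASet (monomerConfig D) = monomers D := by
  simp [ASet, monomers, monomerConfig]

theorem monomers_eq_ASet_iff {N : ℕ} (D : Dimer N) (σ : Config N) :
    monomers D = ASet σ ↔ monomerConfig D = σ := by
  refine ⟨fun hD => funext fun i => ?_, fun hσ => hσ ▸ (ASet_monomerConfig D).symm⟩
  have hi := Finset.ext_iff.1 hD i
  cases hσ : σ i <;> simpa [monomers, ASet, monomerConfig, hσ] using hi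

theorem mConf_monomerConfig {N : ℕ} (D : Dimer N) : mConf (monomerConfig D) = mDim D := by
  rw [mConf, Msum, ASet_monomerConfig, mDim]

theorem sum_wConf_mul (N : ℕ) (J h : ℝ) (f : Config N → ℝ) :
    ∑ σ, wConf N J h σ * f σ = ∑ D, wDim N J h D * f (monomerConfig D) := by
  rw [← sum_fiberwise_of_maps_to (t := univ) (g := monomerConfig) fun _ _ => mem_univ _]
  refine sum_congr rfl fun σ _ => ?_
  have hfiber : ∀ D ∈ univ.filter fun D : Dimer N => monomerConfig D = σ,
      wDim N J h D * f (monomerConfig D) =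
        exp (N * (J * mConf σ ^ 2 + bIMD N J h * mConf σ)) * f σ := by
    intro D hD
    rw [wDim, ← mConf_monomerConfig, (mem_filter.1 hD).2]
  rw [sum_congr rfl hfiber, sum_const, nsmul_eq_mul, wConf, Dcount, mul_assoc]
  simp only [monomers_eq_ASet_iff]

/-- The monomer density of a configuration with `n ≤ N / 2` dimers, written without truncated
subtraction. -/
noncomputable def monomerDensity (N n : ℕ) : ℝ := 1 - 2 * n / N

theorem monomerDensity_mem_Icc {N n : ℕ} (hn : 2 * n ≤ N) :
    monomerDensity N n ∈ Set.Icc (0 : ℝ) 1 := by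
  have hle : 2 * (n : ℝ) / N ≤ 1 := div_le_one_of_le₀ (by exact_mod_cast hn) N.cast_nonneg
  exact ⟨sub_nonneg.2 hle, sub_le_self _ (by positivity)⟩

theorem monomerDensity_succ (N n : ℕ) :
    monomerDensity N (n + 1) = monomerDensity N n - 2 / N := by
  unfold monomerDensity
  push_cast
  ring

theorem natCast_mul_monomerDensity {N : ℕ} (hN : 1 ≤ N) (n : ℕ) :
    N * monomerDensity N n = N - 2 * n := by
  unfold monomerDensity
  field_simp

theorem mDim_eq_monomerDensity {N : ℕ} (hN : 1 ≤ N) (D : Dimer N) :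
    mDim D = monomerDensity N (dimerCard D) := by
  have hcard : ((monomers D).card : ℝ) + 2 * dimerCard D = N := by
    exact_mod_cast card_monomers_add_two_mul_dimerCard D
  rw [mDim, div_eq_iff (by positivity), mul_comm, natCast_mul_monomerDensity hN]
  linarith

theorem sum_comp_mDim {N : ℕ} (hN : 1 ≤ N) (φ : ℝ → ℝ) :
    ∑ D : Dimer N, φ (mDim D) =
      ∑ n ∈ range (N / 2 + 1), matchingCount N n * φ (monomerDensity N n) := by
  have hmaps : ∀ D ∈ (univ : Finset (Dimer N)), dimerCard D ∈ range (N / 2 + 1) := by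
    intro D _
    have := card_monomers_add_two_mul_dimerCard D
    rw [mem_range]
    omega
  rw [← sum_fiberwise_of_maps_to hmaps]
  refine sum_congr rfl fun n hn => ?_
  have hfiber : ∀ D ∈ univ.filter fun D : Dimer N => dimerCard D = n,
      φ (mDim D) = φ (monomerDensity N n) := by
    intro D hD
    rw [mDim_eq_monomerDensity hN, (mem_filter.1 hD).2]
  rw [sum_congr rfl hfiber, sum_const, nsmul_eq_mul, card_filter_dimerCard]
  rw [mem_range] at hn
  omega

/-- The Boltzmann factor `exp(-H)` at monomer density `m`. -/
noncomputable def boltzmannFactor (N : ℕ) (J h m : ℝ) : ℝ :=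
  exp (N * (J * m ^ 2 + bIMD N J h * m))

theorem boltzmannFactor_add_two_div {N : ℕ} (hN : 1 ≤ N) (J h m : ℝ) :
    boltzmannFactor N J h (m + 2 / N) =
      boltzmannFactor N J h m * (N * exp (2 * tauFun J h (m + 1 / N))) := by
  have hN0 : (0 : ℝ) < N := by positivity
  have hexp : N * exp (2 * tauFun J h (m + 1 / N)) =
      exp (log N + 2 * tauFun J h (m + 1 / N)) := by rw [exp_add, exp_log hN0]
  rw [hexp, boltzmannFactor, boltzmannFactor, ← exp_add, bIMD, tauFun]
  congr 1
  field_simp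
  ring

/-- The total Gibbs weight of the dimer configurations with `n ≤ N / 2` dimers. -/
noncomputable def dimerWeight (N : ℕ) (J h : ℝ) (n : ℕ) : ℝ :=
  matchingCount N n * boltzmannFactor N J h (monomerDensity N n)

theorem dimerWeight_pos (N : ℕ) (J h : ℝ) (n : ℕ) : 0 < dimerWeight N J h n :=
  mul_pos (matchingCount_pos N n) (exp_pos _)

theorem dimerWeight_succ_mul {N n : ℕ} (J h : ℝ) (hn : 2 * (n + 1) ≤ N) :
    dimerWeight N J h (n + 1) * ((1 - monomerDensity N (n + 1)) *
        exp (2 * tauFun J h (monomerDensity N (n + 1) + 1 / N))) =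
      dimerWeight N J h n * (monomerDensity N n * (monomerDensity N n - 1 / N)) := by
  have hN : 1 ≤ N := by omega
  have hN0 : (N : ℝ) ≠ 0 := by positivity
  have hsucc := natCast_mul_monomerDensity hN (n + 1)
  have hcur := natCast_mul_monomerDensity hN n
  have hboltzmann := boltzmannFactor_add_two_div hN J h (monomerDensity N (n + 1))
  rw [show monomerDensity N (n + 1) + 2 / N = monomerDensity N n by
    rw [monomerDensity_succ]; ring] at hboltzmann
  have hcount := matchingCount_succ hn
  rw [← hcur, show 2 * ((n : ℝ) + 1) = N * (1 - monomerDensity N (n + 1)) by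
    push_cast at hsucc; linarith] at hcount
  unfold dimerWeight
  rw [hboltzmann]
  generalize monomerDensity N (n + 1) = m' at *
  apply mul_left_cancel₀ hN0
  have hinv : (N : ℝ) * (1 / N) = 1 := by field_simp
  linear_combination boltzmannFactor N J h m' * exp (2 * tauFun J h (m' + 1 / N)) * hcount +
    matchingCount N n * boltzmannFactor N J h m' * N * exp (2 * tauFun J h (m' + 1 / N)) *
      monomerDensity N n * hinv

theorem sum_wConf_mul_comp_mConf {N : ℕ} (hN : 1 ≤ N) (J h : ℝ) (φ : ℝ → ℝ) :
    ∑ σ, wConf N J h σ * φ (mConf σ) =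
      ∑ n ∈ range (N / 2 + 1), dimerWeight N J h n * φ (monomerDensity N n) := by
  simp only [sum_wConf_mul, mConf_monomerConfig, dimerWeight, mul_assoc]
  exact sum_comp_mDim hN fun m => boltzmannFactor N J h m * φ m

theorem EConf_comp_mConf {N : ℕ} (hN : 1 ≤ N) (J h : ℝ) (φ : ℝ → ℝ) :
    EConf N J h (fun σ => φ (mConf σ)) =
      (∑ n ∈ range (N / 2 + 1), dimerWeight N J h n * φ (monomerDensity N n)) /
        ∑ n ∈ range (N / 2 + 1), dimerWeight N J h n := by
  have hpartition := sum_wConf_mul_comp_mConf hN J h fun _ => 1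
  simp only [mul_one] at hpartition
  rw [EConf, sum_wConf_mul_comp_mConf hN, hpartition]

/-! ### The exchange identity -/

theorem monomerDensity_half_mul_sub {N : ℕ} (hN : 1 ≤ N) :
    monomerDensity N (N / 2) * (monomerDensity N (N / 2) - 1 / N) = 0 := by
  have hN0 : (N : ℝ) ≠ 0 := by positivity
  have hm := natCast_mul_monomerDensity hN (N / 2)
  have hdivmod : (N : ℝ) = 2 * (N / 2 : ℕ) + (N % 2 : ℕ) := by
    exact_mod_cast (Nat.div_add_mod N 2).symm
  rw [mul_eq_zero, sub_eq_zero, eq_div_iff hN0, mul_comm _ (N : ℝ)]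
  rcases Nat.mod_two_eq_zero_or_one N with hmod | hmod <;> rw [hmod] at hdivmod <;>
    push_cast at hdivmod
  · exact Or.inl ((mul_eq_zero.1 (by linarith)).resolve_left hN0)
  · exact Or.inr (by linarith)

/-- Detailed balance for removing a dimer: both sides are the stationary flow between the
densities `m` and `m + 2 / N`, weighted by `φ m`. -/
theorem EConf_exchange {N : ℕ} (hN : 1 ≤ N) (J h : ℝ) (φ : ℝ → ℝ) :
    EConf N J h (fun σ => mConf σ * (mConf σ - 1 / N) * φ (mConf σ - 2 / N)) =
      EConf N J h (fun σ => (1 - mConf σ) * exp (2 * tauFun J h (mConf σ + 1 / N)) *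
        φ (mConf σ)) := by
  rw [EConf_comp_mConf hN J h fun m => m * (m - 1 / N) * φ (m - 2 / N),
    EConf_comp_mConf hN J h fun m => (1 - m) * exp (2 * tauFun J h (m + 1 / N)) * φ m]
  congr 1
  rw [sum_range_succ, sum_range_succ']
  have hfirst : monomerDensity N 0 = 1 := by simp [monomerDensity]
  simp only [monomerDensity_half_mul_sub hN, hfirst, sub_self, zero_mul, mul_zero, add_zero]
  refine sum_congr rfl fun n hn => ?_
  have hn : 2 * (n + 1) ≤ N := by
    rw [mem_range] at hn
    omega
  rw [← monomerDensity_succ]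
  linear_combination -φ (monomerDensity N (n + 1)) * dimerWeight_succ_mul J h hn

/-- The factor `m² - (1 - m) e^{2τ(m)}` of `L₁`, which carries its sign. -/
noncomputable def criticalFactor (J h m : ℝ) : ℝ := m ^ 2 - (1 - m) * exp (2 * tauFun J h m)

theorem exists_mul_EConf_criticalFactor_mul_le (J h : ℝ) {φ : ℝ → ℝ} (hφ : ContDiff ℝ 1 φ) :
    ∃ A : ℝ, ∀ N : ℕ, 1 ≤ N →
      N * EConf N J h (fun σ => criticalFactor J h (mConf σ) * φ (mConf σ)) ≤ A := by
  let G : ℝ × ℝ → ℝ := fun p =>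
    p.1 * (p.1 - p.2) * φ (p.1 - 2 * p.2) - (1 - p.1) * exp (2 * tauFun J h (p.1 + p.2)) * φ p.1
  have hG : ContDiff ℝ 1 G := by
    unfold G tauFun
    fun_prop
  obtain ⟨A, hA⟩ := hG.contDiffOn.exists_lipschitzOnWith one_ne_zero
    ((convex_Icc (0 : ℝ) 1).prod (convex_Icc (0 : ℝ) 1)) (isCompact_Icc.prod isCompact_Icc)
  refine ⟨A, fun N hN => ?_⟩
  have hN0 : (0 : ℝ) < N := by positivity
  have hstep : (1 : ℝ) / N ∈ Set.Icc (0 : ℝ) 1 :=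
    ⟨by positivity, div_le_one_of_le₀ (by exact_mod_cast hN) hN0.le⟩
  have hexchange : EConf N J h (fun σ => G (mConf σ, 1 / N)) = 0 := by
    have h2 : 2 * (1 / (N : ℝ)) = 2 / N := by ring
    simp only [G, h2]
    rw [EConf_sub, EConf_exchange hN, sub_self]
  have hfrozen : ∀ σ : Config N,
      criticalFactor J h (mConf σ) * φ (mConf σ) = G (mConf σ, 0) := by
    intro σ
    simp only [G, criticalFactor, mul_zero, sub_zero, add_zero]
    ring
  have hlipschitz : ∀ σ : Config N, G (mConf σ, 0) - G (mConf σ, 1 / N) ≤ A * (1 / N) := by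
    intro σ
    have hdist := hA.dist_le_mul (mConf σ, 0) ⟨mConf_mem_Icc σ, Set.left_mem_Icc.2 zero_le_one⟩
      (mConf σ, 1 / N) ⟨mConf_mem_Icc σ, hstep⟩
    rw [dist_prod_same_left, dist_zero_left, Real.norm_of_nonneg hstep.1] at hdist
    exact (le_abs_self _).trans hdist
  calc N * EConf N J h (fun σ => criticalFactor J h (mConf σ) * φ (mConf σ))
      = N * EConf N J h (fun σ => G (mConf σ, 0) - G (mConf σ, 1 / N)) := by
        simp only [hfrozen, EConf_sub, hexchange, sub_zero]
    _ ≤ N * (A * (1 / N)) :=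
        mul_le_mul_of_nonneg_left
          (EConf_le_of_forall_le (mul_nonneg A.coe_nonneg hstep.1) hlipschitz) hN0.le
    _ = A := by field_simp

/-! ### Free energy -/

/-- The exponential growth rate in `N` of the Gibbs weight at monomer density `m`, up to a term
that does not depend on `m`. -/
noncomputable def freeEnergy (J h m : ℝ) : ℝ :=
  J * m ^ 2 + (h - J) * m + negMulLog m + negMulLog (1 - m) / 2 + (m - 1) / 2

theorem continuous_freeEnergy (J h : ℝ) : Continuous (freeEnergy J h) := by
  unfold freeEnergy
  fun_prop

theorem exp_two_mul_sq (x : ℝ) : exp (2 * x) ^ 2 = exp (4 * x) := by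
  rw [← exp_nat_mul]
  ring_nf

theorem gFun_pos (x : ℝ) : 0 < gFun x := by
  have hlt : exp (2 * x) < √(exp (4 * x) + 4 * exp (2 * x)) :=
    lt_sqrt_of_sq_lt (by rw [exp_two_mul_sq]; linarith [exp_pos (2 * x)])
  exact half_pos (sub_pos.2 hlt)

theorem gFun_sq (x : ℝ) : gFun x ^ 2 = (1 - gFun x) * exp (2 * x) := by
  have hsqrt : √(exp (4 * x) + 4 * exp (2 * x)) ^ 2 = exp (4 * x) + 4 * exp (2 * x) :=
    sq_sqrt (by positivity)
  unfold gFun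
  linear_combination hsqrt / 4 - exp_two_mul_sq x / 4

theorem gFun_lt_one (x : ℝ) : gFun x < 1 := by
  have hpos : 0 < (1 - gFun x) * exp (2 * x) := gFun_sq x ▸ pow_pos (gFun_pos x) 2
  exact sub_pos.1 (pos_of_mul_pos_left hpos (exp_pos _).le)

theorem eq_gFun_of_sq_eq {x m : ℝ} (hm : 0 ≤ m) (hsq : m ^ 2 = (1 - m) * exp (2 * x)) :
    m = gFun x := by
  have hfactor : (m - gFun x) * (m + gFun x + exp (2 * x)) = 0 := by
    linear_combination hsq - gFun_sq x
  have hpos : 0 < m + gFun x + exp (2 * x) := by linarith [gFun_pos x, exp_pos (2 * x)]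
  exact sub_eq_zero.1 ((mul_eq_zero.1 hfactor).resolve_right hpos.ne')

theorem log_gFun_sub_log_one_sub_gFun_div_two (x : ℝ) :
    log (gFun x) - log (1 - gFun x) / 2 = x := by
  have hlog := congrArg log (gFun_sq x)
  rw [log_mul (sub_pos.2 (gFun_lt_one x)).ne' (exp_pos _).ne', log_exp, log_pow] at hlog
  push_cast at hlog
  linarith

theorem ptilde_sub_freeEnergy (J h m : ℝ) :
    ptilde J h m - freeEnergy J h m =
      gFun (tauFun J h m) * InformationTheory.klFun (m / gFun (tauFun J h m)) +
        (1 - gFun (tauFun J h m)) *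
          InformationTheory.klFun ((1 - m) / (1 - gFun (tauFun J h m))) / 2 := by
  have hlog := log_gFun_sub_log_one_sub_gFun_div_two (tauFun J h m)
  rw [mul_klFun_div (gFun_pos _).ne', mul_klFun_div (sub_pos.2 (gFun_lt_one _)).ne', ptilde,
    freeEnergy]
  generalize gFun (tauFun J h m) = g at *
  rw [tauFun] at hlog
  linear_combination m * hlog

theorem freeEnergy_le_ptilde (J h : ℝ) {m : ℝ} (hm : m ∈ Set.Icc (0 : ℝ) 1) :
    freeEnergy J h m ≤ ptilde J h m := by
  have hg := gFun_pos (tauFun J h m)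
  have hg' := sub_pos.2 (gFun_lt_one (tauFun J h m))
  rw [← sub_nonneg, ptilde_sub_freeEnergy]
  have hkl := InformationTheory.klFun_nonneg (div_nonneg hm.1 hg.le)
  have hkl' := InformationTheory.klFun_nonneg (div_nonneg (sub_nonneg.2 hm.2) hg'.le)
  positivity

theorem freeEnergy_eq_ptilde {J h m : ℝ} (hm : m = gFun (tauFun J h m)) :
    freeEnergy J h m = ptilde J h m := by
  have hg := (gFun_pos (tauFun J h m)).ne'
  have hg' := (sub_pos.2 (gFun_lt_one (tauFun J h m))).ne'
  have hsub := ptilde_sub_freeEnergy J h m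
  rw [← hm] at hg hg' hsub
  rw [div_self hg, div_self hg', InformationTheory.klFun_one] at hsub
  linarith

theorem freeEnergy_lt_of_ptilde_lt {J h m m₀ : ℝ} (hm : m ∈ Set.Icc (0 : ℝ) 1) (hm₀ : 0 ≤ m₀)
    (hcrit : criticalFactor J h m₀ = 0) (hlt : ptilde J h m < ptilde J h m₀) :
    freeEnergy J h m < freeEnergy J h m₀ :=
  calc freeEnergy J h m ≤ ptilde J h m := freeEnergy_le_ptilde J h hm
    _ < ptilde J h m₀ := hlt
    _ = freeEnergy J h m₀ :=
      (freeEnergy_eq_ptilde (eq_gFun_of_sq_eq hm₀ (sub_eq_zero.1 hcrit))).symm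

/-! ### Large deviations of the monomer density -/

theorem log_dimerWeight {N n : ℕ} (J h : ℝ) (hN : 1 ≤ N) (hn : 2 * n ≤ N) :
    log (dimerWeight N J h n) =
      N * log N / 2 + N * freeEnergy J h (monomerDensity N n) +
        stirlingRemainder N - stirlingRemainder (N - 2 * n) - stirlingRemainder n := by
  have hmonomers := natCast_mul_monomerDensity hN n
  have hmonomers' : ((N - 2 * n : ℕ) : ℝ) = N * monomerDensity N n := by
    rw [hmonomers]
    push_cast [hn]
    ring
  have hdimers : 2 * (n : ℝ) = N * (1 - monomerDensity N n) := by linarith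
  have hentropy := negMulLog_mul N (monomerDensity N n)
  have hentropy' := negMulLog_mul N (1 - monomerDensity N n)
  rw [← hmonomers'] at hentropy
  rw [← hdimers, negMulLog_mul] at hentropy'
  rw [dimerWeight, matchingCount, boltzmannFactor, log_mul (by positivity) (exp_pos _).ne',
    log_exp, log_div (by positivity) (by positivity), log_mul (by positivity) (by positivity),
    log_mul (by positivity) (by positivity), log_pow]
  unfold stirlingRemainder freeEnergy bIMD
  simp only [negMulLog] at *
  linear_combination hentropy + hentropy' / 2 + hmonomers' + hdimers / 2

theorem dimerWeight_le_mul_exp {N n n₀ : ℕ} (J h : ℝ) (hN : 1 ≤ N) (hn : 2 * n ≤ N)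
    (hn₀ : 2 * n₀ ≤ N) :
    dimerWeight N J h n ≤ exp 2 * N *
      exp (N * (freeEnergy J h (monomerDensity N n) - freeEnergy J h (monomerDensity N n₀))) *
        dimerWeight N J h n₀ := by
  have hw := dimerWeight_pos N J h n₀
  rw [← log_le_log_iff (dimerWeight_pos N J h n) (by positivity), log_mul (by positivity) hw.ne',
    log_mul (by positivity) (by positivity), log_mul (by positivity) (by positivity), log_exp,
    log_exp, log_dimerWeight J h hN hn, log_dimerWeight J h hN hn₀]
  have hnonneg := stirlingRemainder_nonneg (N - 2 * n)
  have hnonneg' := stirlingRemainder_nonneg n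
  have hle := stirlingRemainder_le (Nat.sub_le N (2 * n₀))
  have hle' := stirlingRemainder_le (show n₀ ≤ N by omega)
  linarith

theorem probConf_mConf_mem_le {N n₀ : ℕ} {J h ε : ℝ} {A : Set ℝ} (hN : 1 ≤ N)
    (hn₀ : 2 * n₀ ≤ N)
    (hA : ∀ m ∈ A ∩ Set.Icc 0 1,
      freeEnergy J h m ≤ freeEnergy J h (monomerDensity N n₀) - ε) :
    probConf N J h (fun σ => mConf σ ∈ A) ≤ exp 2 * N ^ 2 * exp (-(N * ε)) := by
  set Z := ∑ n ∈ range (N / 2 + 1), dimerWeight N J h n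
  have hZ : 0 ≤ Z := sum_nonneg fun n _ => (dimerWeight_pos N J h n).le
  have hn₀Z : dimerWeight N J h n₀ ≤ Z :=
    single_le_sum (f := dimerWeight N J h) (fun n _ => (dimerWeight_pos N J h n).le)
      (mem_range.2 (by omega))
  have hterm : ∀ n ∈ range (N / 2 + 1),
      dimerWeight N J h n * A.indicator 1 (monomerDensity N n) ≤
        exp 2 * N * exp (-(N * ε)) * Z := by
    intro n hn
    have hn : 2 * n ≤ N := by
      rw [mem_range] at hn
      omega
    by_cases hmA : monomerDensity N n ∈ A
    · have hweight := (dimerWeight_pos N J h n₀).le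
      rw [Set.indicator_of_mem hmA, Pi.one_apply, mul_one]
      have hgap := hA _ ⟨hmA, monomerDensity_mem_Icc hn⟩
      refine (dimerWeight_le_mul_exp J h hN hn hn₀).trans ?_
      rw [← mul_neg]
      gcongr
      linarith
    · rw [Set.indicator_of_notMem hmA, mul_zero]
      positivity
  have hcount : ((N / 2 + 1 : ℕ) : ℝ) ≤ N := by
    exact_mod_cast (show N / 2 + 1 ≤ N by omega)
  rw [← EConf_indicator_comp_mConf, EConf_comp_mConf hN J h (A.indicator 1)]
  refine div_le_of_le_mul₀ hZ (by positivity) ?_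
  calc ∑ n ∈ range (N / 2 + 1), dimerWeight N J h n * A.indicator 1 (monomerDensity N n)
      ≤ (N / 2 + 1 : ℕ) * (exp 2 * N * exp (-(N * ε)) * Z) := by
        simpa using sum_le_card_nsmul _ _ _ hterm
    _ ≤ N * (exp 2 * N * exp (-(N * ε)) * Z) := by gcongr
    _ = exp 2 * N ^ 2 * exp (-(N * ε)) * Z := by ring

section LargeDeviations

open Filter Topology

variable {J h m₀ : ℝ}

theorem exists_freeEnergy_gap
    (hF : ∀ m ∈ Set.Icc (0 : ℝ) 1, m ≠ m₀ → freeEnergy J h m < freeEnergy J h m₀)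
    {δ : ℝ} (hδ : 0 < δ) :
    ∃ η > 0, ∀ m ∈ {m | δ ≤ dist m m₀} ∩ Set.Icc 0 1,
      freeEnergy J h m ≤ freeEnergy J h m₀ - η := by
  have hcompact : IsCompact ({m | δ ≤ dist m m₀} ∩ Set.Icc 0 1) :=
    isCompact_Icc.inter_left (isClosed_le continuous_const (by fun_prop))
  rcases Set.eq_empty_or_nonempty ({m | δ ≤ dist m m₀} ∩ Set.Icc 0 1) with hempty | hne
  · exact ⟨1, one_pos, by simp [hempty]⟩
  · obtain ⟨x, ⟨hxfar, hx⟩, hmax⟩ :=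
      hcompact.exists_isMaxOn hne (continuous_freeEnergy J h).continuousOn
    have hxm₀ : x ≠ m₀ := dist_pos.1 (hδ.trans_le hxfar)
    refine ⟨freeEnergy J h m₀ - freeEnergy J h x, sub_pos.2 (hF x hx hxm₀), fun m hm => ?_⟩
    simpa using hmax hm

theorem exists_monomerDensity_tendsto (hm₀ : m₀ ∈ Set.Icc (0 : ℝ) 1) :
    ∃ n : ℕ → ℕ, (∀ N, 2 * n N ≤ N) ∧
      Tendsto (fun N => monomerDensity N (n N)) atTop (𝓝 m₀) := by
  have ha : 0 ≤ (1 - m₀) / 2 := div_nonneg (sub_nonneg.2 hm₀.2) zero_le_two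
  refine ⟨fun N => ⌊(1 - m₀) / 2 * N⌋₊, fun N => ?_, ?_⟩
  · have hfloor := Nat.floor_le (mul_nonneg ha N.cast_nonneg)
    have : (2 : ℝ) * ⌊(1 - m₀) / 2 * N⌋₊ ≤ N := by
      nlinarith [mul_nonneg hm₀.1 (N.cast_nonneg (α := ℝ))]
    exact_mod_cast this
  · have hfloor := (tendsto_nat_floor_mul_div_atTop ha).comp tendsto_natCast_atTop_atTop
    have hlim := (hfloor.const_mul 2).const_sub 1
    rw [show 1 - 2 * ((1 - m₀) / 2) = m₀ by ring] at hlim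
    simpa only [monomerDensity, Function.comp_apply, mul_div_assoc] using hlim

theorem exists_mul_probConf_far_le (hm₀ : m₀ ∈ Set.Icc (0 : ℝ) 1)
    (hF : ∀ m ∈ Set.Icc (0 : ℝ) 1, m ≠ m₀ → freeEnergy J h m < freeEnergy J h m₀)
    {δ : ℝ} (hδ : 0 < δ) :
    ∃ C : ℝ, ∀ N : ℕ, N * probConf N J h (fun σ => mConf σ ∈ {m | δ ≤ dist m m₀}) ≤ C := by
  obtain ⟨η, hη, hgap⟩ := exists_freeEnergy_gap hF hδ
  obtain ⟨n, hn, hlim⟩ := exists_monomerDensity_tendsto hm₀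
  have hnear : ∀ᶠ N in atTop,
      freeEnergy J h m₀ - η / 2 < freeEnergy J h (monomerDensity N (n N)) :=
    ((continuous_freeEnergy J h).tendsto m₀).comp hlim |>.eventually_const_lt
      (sub_lt_self _ (half_pos hη))
  have hbound : ∀ᶠ N : ℕ in atTop,
      N * probConf N J h (fun σ => mConf σ ∈ {m | δ ≤ dist m m₀}) ≤
        exp 2 * (N ^ 3 * exp (-(N * (η / 2)))) := by
    filter_upwards [hnear, eventually_ge_atTop 1] with N hN hN1
    have hprob : probConf N J h (fun σ => mConf σ ∈ {m | δ ≤ dist m m₀}) ≤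
        exp 2 * N ^ 2 * exp (-(N * (η / 2))) :=
      probConf_mConf_mem_le hN1 (hn N) fun m hm => by linarith [hgap m hm]
    calc N * probConf N J h (fun σ => mConf σ ∈ {m | δ ≤ dist m m₀})
        ≤ N * (exp 2 * N ^ 2 * exp (-(N * (η / 2)))) := by gcongr
      _ = exp 2 * (N ^ 3 * exp (-(N * (η / 2)))) := by ring
  have hbounded : IsBoundedUnder (· ≤ ·) atTop fun N : ℕ =>
      N * probConf N J h (fun σ => mConf σ ∈ {m | δ ≤ dist m m₀}) :=
    ((tendsto_natCast_pow_mul_exp_neg_mul (half_pos hη) 3).const_mul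
      (exp 2)).isBoundedUnder_le.mono_le hbound
  obtain ⟨C, hC⟩ := hbounded.bddAbove_range
  exact ⟨C, fun N => hC ⟨N, rfl⟩⟩

end LargeDeviations

/-! ### Local behaviour at a degenerate critical point -/

section LocalBehaviour

open Filter Topology

theorem contDiffAt_Lone (J h : ℝ) {m : ℝ} (hm : m ≤ 1) (n : WithTop ℕ∞) :
    ContDiffAt ℝ n (Lone J h) m := by
  have hden : (1 - m) + exp (2 * tauFun J h m) ≠ 0 := by
    have := sub_nonneg.2 hm
    positivity
  unfold tauFun at hden
  unfold Lone tauFun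
  fun_prop (disch := assumption)

theorem Lone_eq_mul_criticalFactor (J h m : ℝ) :
    Lone J h m =
      2 * (1 - m) / ((1 - m) + exp (2 * tauFun J h m)) * criticalFactor J h m := by
  unfold Lone criticalFactor
  ring

theorem criticalFactor_eq_zero_of_Lone_eq_zero {J h m : ℝ} (hm : m < 1) (hL : Lone J h m = 0) :
    criticalFactor J h m = 0 := by
  rw [Lone_eq_mul_criticalFactor] at hL
  have : 0 < 1 - m := sub_pos.2 hm
  exact (mul_eq_zero.1 hL).resolve_left (by positivity)

theorem Lone_mul_le_two_mul_criticalFactor_mul {J h m y : ℝ} (hm : m < 1)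
    (hL : 0 ≤ Lone J h m * y) : Lone J h m * y ≤ 2 * (criticalFactor J h m * y) := by
  have hm' : 0 < 1 - m := sub_pos.2 hm
  have hexp := exp_pos (2 * tauFun J h m)
  rw [Lone_eq_mul_criticalFactor, mul_assoc] at *
  have hpos : 0 < 2 * (1 - m) / ((1 - m) + exp (2 * tauFun J h m)) := by positivity
  have hle : 2 * (1 - m) / ((1 - m) + exp (2 * tauFun J h m)) ≤ 2 :=
    div_le_of_le_mul₀ (by positivity) zero_le_two (by linarith)
  exact mul_le_mul_of_nonneg_right hle (nonneg_of_mul_nonneg_right hL hpos)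

theorem eventually_Lone_mul_sub_one_nonpos (J h : ℝ) :
    ∀ᶠ m in 𝓝 1, Lone J h m * (m - 1) ≤ 0 := by
  have hcont : Continuous (criticalFactor J h) := by
    unfold criticalFactor tauFun
    fun_prop
  have hcont' : Continuous fun m => (1 - m) + exp (2 * tauFun J h m) := by
    unfold tauFun
    fun_prop
  filter_upwards [hcont.tendsto 1 |>.eventually_const_lt (u := 0) (by simp [criticalFactor]),
    hcont'.tendsto 1 |>.eventually_const_lt (u := 0) (by simp [exp_pos])] with m hm hm'
  have hsq : Lone J h m * (m - 1) =
      -(2 * (1 - m) ^ 2 / ((1 - m) + exp (2 * tauFun J h m)) * criticalFactor J h m) := by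
    rw [Lone_eq_mul_criticalFactor]
    ring
  rw [hsq]
  exact neg_nonpos.2 (by positivity)

variable {J h m₀ : ℝ} {n : ℕ}

theorem lt_one_of_iteratedDeriv_Lone_pos (hn : Odd n) (hm₀ : m₀ ≤ 1)
    (hzero : ∀ l < n, iteratedDeriv l (Lone J h) m₀ = 0)
    (hpos : 0 < iteratedDeriv n (Lone J h) m₀) : m₀ < 1 := by
  refine lt_of_le_of_ne hm₀ ?_
  rintro rfl
  obtain ⟨c, hc, hlower⟩ :=
    exists_eventually_pow_succ_le_mul_sub hn (contDiffAt_Lone J h le_rfl n) hzero hpos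
  have hcontra : ∀ᶠ _ in 𝓝[≠] (1 : ℝ), False := by
    filter_upwards [nhdsWithin_le_nhds hlower,
      nhdsWithin_le_nhds (eventually_Lone_mul_sub_one_nonpos J h), self_mem_nhdsWithin]
      with m hm hm' hne
    have := hn.add_one.pow_pos (sub_ne_zero.2 hne)
    exact ((mul_pos hc this).trans_le hm).not_ge hm'
  simpa using hcontra.exists

theorem criticalFactor_eq_zero_of_iteratedDeriv_Lone_pos (hn : Odd n) (hm₀ : m₀ ≤ 1)
    (hzero : ∀ l < n, iteratedDeriv l (Lone J h) m₀ = 0)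
    (hpos : 0 < iteratedDeriv n (Lone J h) m₀) : criticalFactor J h m₀ = 0 :=
  criticalFactor_eq_zero_of_Lone_eq_zero (lt_one_of_iteratedDeriv_Lone_pos hn hm₀ hzero hpos)
    (by simpa using hzero 0 hn.pos)

theorem exists_eventually_pow_succ_le_criticalFactor_mul_sub (hn : Odd n) (hm₀ : m₀ < 1)
    (hzero : ∀ l < n, iteratedDeriv l (Lone J h) m₀ = 0)
    (hpos : 0 < iteratedDeriv n (Lone J h) m₀) :
    ∃ c > 0, ∀ᶠ m in 𝓝 m₀, c * (m - m₀) ^ (n + 1) ≤ criticalFactor J h m * (m - m₀) := by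
  obtain ⟨c, hc, hlower⟩ :=
    exists_eventually_pow_succ_le_mul_sub hn (contDiffAt_Lone J h hm₀.le n) hzero hpos
  refine ⟨c / 2, half_pos hc, ?_⟩
  filter_upwards [hlower, eventually_lt_nhds hm₀] with m hm hm1
  have hnonneg : 0 ≤ c * (m - m₀) ^ (n + 1) := mul_nonneg hc.le (hn.add_one.pow_nonneg _)
  linarith [Lone_mul_le_two_mul_criticalFactor_mul hm1 (hnonneg.trans hm)]

end LocalBehaviour

/-! ### The moment bound -/

theorem EConf_rescaled_pow {N : ℕ} (hN : 1 ≤ N) (J h m₀ : ℝ) (k : ℕ) :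
    EConf N J h (fun σ => (((Msum σ : ℝ) - N * m₀) /
        (N : ℝ) ^ ((2 * (k : ℝ) + 1) / (2 * (k : ℝ) + 2))) ^ (2 * k + 2)) =
      N * EConf N J h fun σ => (mConf σ - m₀) ^ (2 * k + 2) := by
  have hN0 : (0 : ℝ) < N := by positivity
  have hcenter : ∀ σ : Config N, (Msum σ : ℝ) - N * m₀ = N * (mConf σ - m₀) := by
    intro σ
    unfold mConf
    field_simp
  have hexponent : (2 * (k : ℝ) + 1) / (2 * (k : ℝ) + 2) =
      (2 * k + 1 : ℕ) / ((2 * k + 1 : ℕ) + 1) := by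
    push_cast
    ring
  simp only [hcenter, hexponent, mul_div_rpow_pow_succ hN0, EConf_const_mul]

/-- For `J < 0` a critical point of `𝑝̃` is its minimizer, so the maximality that is meaningful
for every `J` is that of the free energy. -/
theorem stmt10_general (J h : ℝ) (k : ℕ) (m₀ : ℝ) (hm₀ : m₀ ∈ Set.Icc (0 : ℝ) 1)
    (hF : ∀ m ∈ Set.Icc (0 : ℝ) 1, m ≠ m₀ → freeEnergy J h m < freeEnergy J h m₀)
    (hder0 : ∀ l : ℕ, l ≤ 2 * k → iteratedDeriv l (Lone J h) m₀ = 0)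
    (hderpos : 0 < iteratedDeriv (2 * k + 1) (Lone J h) m₀) :
    ∃ K : ℝ, ∀ N : ℕ, 1 ≤ N →
      EConf N J h
          (fun σ => (((Msum σ : ℝ) - N * m₀) /
            (N : ℝ) ^ ((2 * (k : ℝ) + 1) / (2 * (k : ℝ) + 2))) ^ (2 * k + 2)) ≤ K := by
  have hzero : ∀ l < 2 * k + 1, iteratedDeriv l (Lone J h) m₀ = 0 :=
    fun l hl => hder0 l (Nat.le_of_lt_succ hl)
  have hodd : Odd (2 * k + 1) := odd_two_mul_add_one k
  have hlt : m₀ < 1 := lt_one_of_iteratedDeriv_Lone_pos hodd hm₀.2 hzero hderpos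
  obtain ⟨c, hc, hlower⟩ :=
    exists_eventually_pow_succ_le_criticalFactor_mul_sub hodd hlt hzero hderpos
  obtain ⟨δ, hδ, b, hb, hpointwise⟩ := exists_le_add_indicator_of_eventually_le
    (isCompact_Icc (a := (0 : ℝ)) (b := 1)) (by fun_prop)
    (by unfold criticalFactor tauFun; fun_prop) hlower
  obtain ⟨A, hdrift⟩ := exists_mul_EConf_criticalFactor_mul_le J h
    (φ := fun m => m - m₀) (by fun_prop)
  obtain ⟨C, hfar⟩ := exists_mul_probConf_far_le hm₀ hF hδ
  refine ⟨c⁻¹ * (A + b * C), fun N hN => ?_⟩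
  have hmean := EConf_mono (N := N) (J := J) (h := h) fun σ => hpointwise _ (mConf_mem_Icc σ)
  rw [EConf_const_mul, EConf_add, EConf_const_mul, EConf_indicator_comp_mConf] at hmean
  rw [EConf_rescaled_pow hN, le_inv_mul_iff₀ hc]
  calc c * (N * EConf N J h fun σ => (mConf σ - m₀) ^ (2 * k + 2))
      = N * (c * EConf N J h fun σ => (mConf σ - m₀) ^ (2 * k + 2)) := mul_left_comm ..
    _ ≤ N * (EConf N J h (fun σ => criticalFactor J h (mConf σ) * (mConf σ - m₀)) +
          b * probConf N J h fun σ => mConf σ ∈ {m | δ ≤ dist m m₀}) := by gcongr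
    _ = N * EConf N J h (fun σ => criticalFactor J h (mConf σ) * (mConf σ - m₀)) +
          b * (N * probConf N J h fun σ => mConf σ ∈ {m | δ ≤ dist m m₀}) := by ring
    _ ≤ A + b * C := by gcongr; exacts [hdrift N hN, hfar N]

/-- Uniform moment bound: `E[W^{2k+2}] ≤ K` for all `N ≥ 1`, where
`W = (M - N m₀)/N^{(2k+1)/(2k+2)}`. -/
theorem stmt10 (J h : ℝ) (hJ : 0 ≤ J) (k : ℕ) (hk : k = 0 ∨ k = 1)
    (m₀ : ℝ) (hm₀ : m₀ ∈ Set.Icc (0:ℝ) 1)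
    (hmax : ∀ m ∈ Set.Icc (0:ℝ) 1, ptilde J h m ≤ ptilde J h m₀)
    (huniq : ∀ m ∈ Set.Icc (0:ℝ) 1, ptilde J h m = ptilde J h m₀ → m = m₀)
    (hder0 : ∀ l : ℕ, l ≤ 2*k → iteratedDeriv l (Lone J h) m₀ = 0)
    (hderpos : 0 < iteratedDeriv (2*k+1) (Lone J h) m₀) :
    ∃ K : ℝ, ∀ N : ℕ, 1 ≤ N →
      EConf N J h
          (fun σ => (((Msum σ : ℝ) - N * m₀) / (N:ℝ) ^ ((2*(k:ℝ)+1)/(2*(k:ℝ)+2)))^(2*k+2))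
        ≤ K := by
  have hcrit : criticalFactor J h m₀ = 0 := criticalFactor_eq_zero_of_iteratedDeriv_Lone_pos
    (odd_two_mul_add_one k) hm₀.2 (fun l hl => hder0 l (Nat.le_of_lt_succ hl)) hderpos
  exact stmt10_general J h k m₀ hm₀ (fun m hm hne => freeEnergy_lt_of_ptilde_lt hm hm₀.1 hcrit
    ((hmax m hm).lt_of_ne (mt (huniq m hm) hne))) hder0 hderpos
end

section
/- For every t ∈ {0,1,…,N}, ∑_{σ∈Σ} 1(|𝓐(σ)| = t)·D(σ)·e^{−H(σ)} = ∑_{D∈𝓓} 1(|𝓜(D)| = t)·e^{−H(D)}. Consequently, the probability that m(σ) = t/N under the weighted Curie–Weiss Gibbs measure equals the probability that m(D) = t/N under the IMD Gibbs measure. -/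
open Real Finset MeasureTheory

/-! A spin configuration is the same thing as its set of up-spins `𝓐(σ)`, so weighting `σ` by `D(σ)`
and summing over `σ` amounts to summing over dimer configurations grouped by their monomer set. Both
exponential weights are the same function of that set, so `𝓐(σ)` under the weighted Curie–Weiss
measure and `𝓜(D)` under the IMD measure have the same law, already before normalisation. -/

@[simp]
theorem mem_ASet {N : ℕ} {σ : Config N} {i : Fin N} : i ∈ ASet σ ↔ σ i = true := by
  simp only [ASet, mem_filter_univ]

theorem ASet_injective (N : ℕ) : Function.Injective (ASet : Config N → Finset (Fin N)) := by
  intro σ σ' hσ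
  funext i
  rw [Bool.eq_iff_iff, ← mem_ASet, ← mem_ASet, hσ]

theorem ASet_surjective (N : ℕ) : Function.Surjective (ASet : Config N → Finset (Fin N)) :=
  fun s => ⟨fun i => decide (i ∈ s), by ext i; simp⟩

theorem ASet_bijective (N : ℕ) : Function.Bijective (ASet : Config N → Finset (Fin N)) :=
  ⟨ASet_injective N, ASet_surjective N⟩

theorem sum_card_fiber_smul {ι κ M : Type*} [Fintype ι] [Fintype κ] [DecidableEq κ]
    [AddCommMonoid M] (g : ι → κ) (f : κ → M) :
    ∑ k, #{i | g i = k} • f k = ∑ i, f (g i) := by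
  simp only [← sum_const, sum_fiberwise']

theorem sum_Dcount_smul {M : Type*} [AddCommMonoid M] (N : ℕ) (f : Finset (Fin N) → M) :
    ∑ σ : Config N, Dcount N σ • f (ASet σ) = ∑ D : Dimer N, f (monomers D) :=
  calc ∑ σ : Config N, Dcount N σ • f (ASet σ)
    _ = ∑ s : Finset (Fin N), #{D : Dimer N | monomers D = s} • f s :=
      (ASet_bijective N).sum_comp fun s => #{D : Dimer N | monomers D = s} • f s
    _ = ∑ D : Dimer N, f (monomers D) := sum_card_fiber_smul monomers f

/-- The factor `e^{-H}` common to both models, as a function of the set `s` of monomers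
(equivalently, of up-spins). -/
noncomputable def gibbsWeight (N : ℕ) (J h : ℝ) (s : Finset (Fin N)) : ℝ :=
  exp (N * (J * (#s / N : ℝ) ^ 2 + bIMD N J h * (#s / N : ℝ)))

theorem wDim_eq_gibbsWeight (N : ℕ) (J h : ℝ) (D : Dimer N) :
    wDim N J h D = gibbsWeight N J h (monomers D) :=
  rfl

theorem wConf_eq_Dcount_smul_gibbsWeight (N : ℕ) (J h : ℝ) (σ : Config N) :
    wConf N J h σ = Dcount N σ • gibbsWeight N J h (ASet σ) :=
  (nsmul_eq_mul _ _).symm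

theorem sum_mul_wConf_eq_sum_mul_wDim (N : ℕ) (J h : ℝ) (f : Finset (Fin N) → ℝ) :
    ∑ σ : Config N, f (ASet σ) * wConf N J h σ =
      ∑ D : Dimer N, f (monomers D) * wDim N J h D := by
  simp only [wConf_eq_Dcount_smul_gibbsWeight, wDim_eq_gibbsWeight, mul_smul_comm]
  exact sum_Dcount_smul N fun s => f s * gibbsWeight N J h s

theorem sum_wConf_eq_sum_wDim (N : ℕ) (J h : ℝ) :
    ∑ σ : Config N, wConf N J h σ = ∑ D : Dimer N, wDim N J h D := by
  simpa only [one_mul] using sum_mul_wConf_eq_sum_mul_wDim N J h fun _ => 1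

theorem sum_indicator_wConf_eq_sum_indicator_wDim (N : ℕ) (J h : ℝ) (A : Finset (Fin N) → Prop) :
    ∑ σ : Config N, Set.indicator {σ | A (ASet σ)} (wConf N J h) σ =
      ∑ D : Dimer N, Set.indicator {D | A (monomers D)} (wDim N J h) D := by
  classical
  simpa only [Set.indicator_apply, Set.mem_ofPred_eq, ite_mul, one_mul, zero_mul] using
    sum_mul_wConf_eq_sum_mul_wDim N J h fun s => if A s then 1 else 0

theorem probConf_ASet_eq_probDim_monomers (N : ℕ) (J h : ℝ) (A : Finset (Fin N) → Prop) :
    probConf N J h (fun σ => A (ASet σ)) = probDim N J h (fun D => A (monomers D)) := by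
  rw [probConf, probDim, sum_indicator_wConf_eq_sum_indicator_wDim, sum_wConf_eq_sum_wDim]

/-- The weighted Curie–Weiss model is a reformulation of the IMD
model: for each `t ∈ {0,…,N}`, `∑_σ 1(|𝓐(σ)|=t) D(σ) e^{-H(σ)} = ∑_D 1(|𝓜(D)|=t) e^{-H(D)}`,
and consequently the laws of the magnetization and of the monomer density agree. -/
theorem stmt12 (J h : ℝ) (N : ℕ) (hN : 1 ≤ N) (t : ℕ) (ht : t ≤ N) :
    (∑ σ : Config N, (if Msum σ = t then (1:ℝ) else 0) * wConf N J h σ)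
      = (∑ D : Dimer N, (if (monomers D).card = t then (1:ℝ) else 0) * wDim N J h D) ∧
    probConf N J h (fun σ => mConf σ = (t:ℝ)/N)
      = probDim N J h (fun D => mDim D = (t:ℝ)/N) := by
  constructor
  · exact sum_mul_wConf_eq_sum_mul_wDim N J h fun s => if #s = t then 1 else 0
  · exact probConf_ASet_eq_probDim_monomers N J h fun s => (#s : ℝ) / N = t / N
end
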